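/- Let J be a nonempty finite index set with m = |J|, and for each j ∈ J let F_j be a real inner product space; equip the product E = Π_{j∈J} F_j with the inner product ⟨y, z⟩ = Σ_{j∈J} ⟨y_j, z_j⟩ (so ‖y‖² = Σ_j ‖y_j‖²). For y, ỹ ∈ E and j ∈ J, let update_j(y, ỹ) be the point of E whose j-th coordinate is ỹ_j and whose other coordinates agree with y. Let I be a nonempty finite index set and for each i ∈ I let h_i : E → ℝ be convex and Fréchet differentiable with ∇h_i Lipschitz with constant ℓ_i ≥ 0; set ℓ_max = max_{i∈I} ℓ_i. For each j ∈ J let g_j : F_j → ℝ be convex. Define D(y) = Σ_{i∈I} h_i(y) + Σ_{j∈J} g_j(y_j), η₁ = (m−1)·(Σ_{i∈I} ℓ_i)/m and η₂ = ℓ_max·|I|·(τ+1)/2. Let τ, k be natural numbers with τ ≤ k, let y : ℕ → E be a sequence, for each i ∈ I let d_i be a natural number with d_i ≤ τ, let α > 0, and set v = Σ_{i∈I} ∇h_i(y(k − d_i)). Suppose ỹ ∈ E minimizes over E the function u ↦ ⟨v, u − y(k)⟩ + (1/(2α))·‖u − y(k)‖² + Σ_{j∈J} g_j(u_j). Then for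 every z ∈ E: (1/m)·Σ_{j∈J} D(update_j(y(k), ỹ)) ≤ ((m−1)/m)·D(y(k)) + (1/m)·D(z) + ((η₁ + η₂)/m − 1/(2αm))·‖ỹ − y(k)‖² + (1/(2αm))·‖z − y(k)‖² − (1/(2αm))·‖z − ỹ‖² + (η₂/m)·Σ_{s=k−τ}^{k−1} ‖y(s+1) − y(s)‖². -/

import Mathlib

/-!
Write `x = y k`, `a = yt - x`, `G u = ∑ j, g j (u j)`, `w i = y (k - d i)`. Since updating one
coordinate changes only one summand of `G`, after multiplication by `m` the claim splits into a
`G`-part and one inequality per `h i`.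

* The `G`-part is the three-point inequality for the proximal step (`three_point`).
* Averaging over the coordinates costs only `η₁`:
  `∑ j, h i (upd j) ≤ (m - 1) * h i x + h i yt + (m - 1) / m * ℓ i * ‖a‖ ^ 2` (`sum_update_le`).
  If `m = 1` the update is `yt` itself. If `m ≥ 2`, the descent lemma in each coordinate direction
  followed by the gradient inequality at `x` gives the error `ℓ i / 2 * ‖a‖ ^ 2`, and
  `1 / 2 ≤ (m - 1) / m`.
* The delayed gradient costs `η₂`: the descent lemma at `w i` towards `yt` together with the gradient
  inequality at `w i` towards `z` gives
  `h i yt ≤ h i z + ⟪∇ h i (w i), yt - z⟫ + ℓ i / 2 * ‖yt - w i‖ ^ 2`, and `yt - w i` is a sum of at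
  most `τ + 1` increments, so Cauchy–Schwarz bounds its square (`norm_sq_delay_le`).
-/

open scoped RealInnerProductSpace

section InnerProductLemmas

variable {E : Type*} [NormedAddCommGroup E] [InnerProductSpace ℝ E]

lemma hasDerivAt_line {f : E → ℝ} {f' : E → E}
    (hf : ∀ u, HasFDerivAt f ((innerSL ℝ) (f' u)) u) (x e : E) (t : ℝ) :
    HasDerivAt (fun t : ℝ => f (x + t • e)) ⟪f' (x + t • e), e⟫ t := by
  have hline : HasDerivAt (fun t : ℝ => x + t • e) e t := by
    simpa using ((hasDerivAt_id t).smul_const e).const_add x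
  have h := (hf (x + t • e)).comp_hasDerivAt t hline
  rw [innerSL_apply_apply] at h
  exact h

lemma gradient_inequality {f : E → ℝ} {f' : E → E} (hc : ConvexOn ℝ Set.univ f)
    (hf : ∀ u, HasFDerivAt f ((innerSL ℝ) (f' u)) u) (x z : E) :
    f x + ⟪f' x, z - x⟫ ≤ f z := by
  have hconv : ConvexOn ℝ Set.univ (fun t : ℝ => f (x + t • (z - x))) := by
    have h := hc.comp_affineMap (AffineMap.lineMap x z : ℝ →ᵃ[ℝ] E)
    have heq : f ∘ (AffineMap.lineMap x z : ℝ →ᵃ[ℝ] E) = fun t : ℝ => f (x + t • (z - x)) := by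
      funext t
      simp [AffineMap.lineMap_apply, add_comm]
    rwa [Set.preimage_univ, heq] at h
  have hd := hasDerivAt_line hf x (z - x) 0
  have h := hconv.le_slope_of_hasDerivAt (Set.mem_univ 0) (Set.mem_univ 1) one_pos hd
  simp [slope_def_field] at h
  linarith

/-- The descent lemma for a function with `L`-Lipschitz gradient. -/
lemma quadratic_upper_bound {f : E → ℝ} {f' : E → E} {L : ℝ}
    (hf : ∀ u, HasFDerivAt f ((innerSL ℝ) (f' u)) u)
    (hL : ∀ u w, ‖f' u - f' w‖ ≤ L * ‖u - w‖) (x e : E) :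
    f (x + e) ≤ f x + ⟪f' x, e⟫ + L / 2 * ‖e‖ ^ 2 := by
  -- The gap between the two sides along the segment is antitone in `t`.
  let ψ : ℝ → ℝ := fun t => f (x + t • e) - t * ⟪f' x, e⟫ - L / 2 * ‖e‖ ^ 2 * t ^ 2
  have hψ : ∀ t, HasDerivAt ψ (⟪f' (x + t • e), e⟫ - ⟪f' x, e⟫ - L * ‖e‖ ^ 2 * t) t := by
    intro t
    have h1 := ((hasDerivAt_line hf x e t).sub ((hasDerivAt_id t).mul_const ⟪f' x, e⟫)).sub
      (((hasDerivAt_id t).pow 2).const_mul (L / 2 * ‖e‖ ^ 2))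
    refine h1.congr_deriv ?_
    simp only [id]
    norm_num
    ring
  have hanti : AntitoneOn ψ (Set.Icc 0 1) := by
    refine antitoneOn_of_deriv_nonpos (convex_Icc 0 1)
      (fun t _ => (hψ t).continuousAt.continuousWithinAt)
      (fun t _ => (hψ t).differentiableAt.differentiableWithinAt) ?_
    intro t ht
    rw [interior_Icc] at ht
    rw [(hψ t).deriv, ← inner_sub_left]
    have h1 := real_inner_le_norm (f' (x + t • e) - f' x) e
    have h2 := hL (x + t • e) x
    rw [add_sub_cancel_left, norm_smul, Real.norm_of_nonneg ht.1.le] at h2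
    have h3 := mul_le_mul_of_nonneg_right h2 (norm_nonneg e)
    nlinarith
  have h := hanti (Set.left_mem_Icc.2 zero_le_one) (Set.right_mem_Icc.2 zero_le_one) zero_le_one
  simp [ψ] at h
  linarith

/-- The three-point inequality at a minimizer of a linear plus quadratic plus convex function. -/
lemma three_point {G : E → ℝ} (hG : ConvexOn ℝ Set.univ G) {c : ℝ} {v x p : E}
    (hmin : ∀ u, ⟪v, p - x⟫ + c * ‖p - x‖ ^ 2 + G p ≤ ⟪v, u - x⟫ + c * ‖u - x‖ ^ 2 + G u) (z : E) :
    ⟪v, p - z⟫ + c * ‖p - x‖ ^ 2 + c * ‖z - p‖ ^ 2 + G p ≤ c * ‖z - x‖ ^ 2 + G z := by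
  have hexp : ∀ t : ℝ, ‖p - x + t • (z - p)‖ ^ 2 =
      ‖p - x‖ ^ 2 + 2 * t * ⟪p - x, z - p⟫ + t ^ 2 * ‖z - p‖ ^ 2 := by
    intro t
    rw [norm_add_sq_real, inner_smul_right, norm_smul, mul_pow, Real.norm_eq_abs, sq_abs]
    ring
  -- Minimality along the segment from `p` to `z`, divided by `t`.
  have hseg : ∀ t ∈ Set.Ioc (0 : ℝ) 1,
      0 ≤ ⟪v, z - p⟫ + 2 * c * ⟪p - x, z - p⟫ + G z - G p + c * ‖z - p‖ ^ 2 * t := by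
    intro t ht
    have h1 := hmin (p + t • (z - p))
    have h2 := hG.2 (Set.mem_univ p) (Set.mem_univ z) (sub_nonneg.2 ht.2) ht.1.le (by ring)
    have h3 : (1 - t) • p + t • z = p + t • (z - p) := by module
    have h4 : p + t • (z - p) - x = p - x + t • (z - p) := by module
    rw [h3, smul_eq_mul, smul_eq_mul] at h2
    rw [h4, hexp, inner_add_right, inner_smul_right] at h1
    refine nonneg_of_mul_nonneg_right ?_ ht.1
    linarith
  have hlim : 0 ≤ ⟪v, z - p⟫ + 2 * c * ⟪p - x, z - p⟫ + G z - G p := by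
    have hcont : Filter.Tendsto (fun t : ℝ => ⟪v, z - p⟫ + 2 * c * ⟪p - x, z - p⟫ + G z - G p
        + c * ‖z - p‖ ^ 2 * t) (nhdsWithin 0 (Set.Ioi 0))
        (nhds (⟪v, z - p⟫ + 2 * c * ⟪p - x, z - p⟫ + G z - G p + c * ‖z - p‖ ^ 2 * 0)) :=
      (Continuous.tendsto (by fun_prop) 0).mono_left nhdsWithin_le_nhds
    rw [mul_zero, add_zero] at hcont
    refine ge_of_tendsto hcont ?_
    filter_upwards [Ioc_mem_nhdsGT (zero_lt_one' ℝ)] with t ht using hseg t ht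
  have h1 := hexp 1
  rw [one_smul, show p - x + (z - p) = z - x by abel] at h1
  have h2 : ⟪v, p - z⟫ = -⟪v, z - p⟫ := by rw [← inner_neg_right, neg_sub]
  rw [h2, h1]
  linarith

end InnerProductLemmas

lemma norm_sq_delay_le {V : Type*} [NormedAddCommGroup V] (y : ℕ → V) (p : V) {k τ d : ℕ} (hτk : τ ≤ k) (hd : d ≤ τ) :
    ‖p - y (k - d)‖ ^ 2 ≤
      (τ + 1) * (‖p - y k‖ ^ 2 + ∑ s ∈ Finset.Ico (k - τ) k, ‖y (s + 1) - y s‖ ^ 2) := by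
  have hsplit : p - y (k - d) = (p - y k) + ∑ s ∈ Finset.Ico (k - d) k, (y (s + 1) - y s) := by
    rw [Finset.sum_Ico_sub y (Nat.sub_le k d)]
    abel
  have htri : ‖p - y (k - d)‖ ≤
      ‖p - y k‖ + ∑ s ∈ Finset.Ico (k - τ) k, ‖y (s + 1) - y s‖ := by
    rw [hsplit]
    refine (norm_add_le _ _).trans (add_le_add_right ((norm_sum_le _ _).trans ?_) _)
    exact Finset.sum_le_sum_of_subset_of_nonneg
      (Finset.Ico_subset_Ico_left (by omega)) (fun _ _ _ => norm_nonneg _)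
  have hcs := sq_sum_le_card_mul_sum_sq (s := Finset.Ico (k - τ) k)
    (f := fun s => ‖y (s + 1) - y s‖)
  rw [Nat.card_Ico, Nat.sub_sub_self hτk] at hcs
  refine (pow_le_pow_left₀ (norm_nonneg _) htri 2).trans ?_
  rcases Nat.eq_zero_or_pos τ with rfl | hpos
  · simp
  have hτ : (0 : ℝ) < τ := by exact_mod_cast hpos
  set A := ‖p - y k‖
  set B := ∑ s ∈ Finset.Ico (k - τ) k, ‖y (s + 1) - y s‖
  set S := ∑ s ∈ Finset.Ico (k - τ) k, ‖y (s + 1) - y s‖ ^ 2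
  -- With `B ^ 2 ≤ τ * S`, the cross term satisfies `2 * A * B ≤ τ * A ^ 2 + B ^ 2 / τ`.
  have hBS : B ^ 2 / τ ≤ S := by
    rw [div_le_iff₀ hτ]
    linarith
  have hcross : 2 * A * B ≤ τ * A ^ 2 + B ^ 2 / τ := by
    have h1 : τ * A ^ 2 + B ^ 2 / τ - 2 * A * B = (τ * A - B) ^ 2 / τ := by
      field_simp
      ring
    have h2 : 0 ≤ (τ * A - B) ^ 2 / τ := by positivity
    linarith
  nlinarith

/-- Summing over all single-coordinate updates of `x` towards `p` exceeds
`(m - 1) * f x + f p` by at most `(m - 1) / m * L * ‖p - x‖ ^ 2`. -/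
lemma sum_update_le {J : Type*} [Fintype J] [Nonempty J] [DecidableEq J]
    {F : J → Type*} [∀ j, NormedAddCommGroup (F j)] [∀ j, InnerProductSpace ℝ (F j)]
    {f : PiLp 2 F → ℝ} {f' : PiLp 2 F → PiLp 2 F} {L : ℝ}
    (hc : ConvexOn ℝ Set.univ f) (hf : ∀ u, HasFDerivAt f ((innerSL ℝ) (f' u)) u) (hL0 : 0 ≤ L)
    (hL : ∀ u w, ‖f' u - f' w‖ ≤ L * ‖u - w‖) (x p : PiLp 2 F)
    (q : J → PiLp 2 F) (hq : ∀ j, (q j).ofLp = Function.update x.ofLp j (p j)) (m : ℕ) (hm : m = Fintype.card J) :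
    ∑ j, f (q j) ≤ (m - 1) * f x + f p + (m - 1) / m * L * ‖p - x‖ ^ 2 := by
  have hmpos : 0 < m := hm ▸ Fintype.card_pos
  rcases Nat.lt_or_ge m 2 with hlt | hge
  · have hm1 : m = 1 := by omega
    have hsub : Subsingleton J := Fintype.card_le_one_iff_subsingleton.1 (by omega)
    have hqp : ∀ j, q j = p := by
      intro j
      ext l
      rw [hq, Subsingleton.elim l j, Function.update_self]
    subst hm1
    simp [hqp, ← hm]
  · have hstep : ∀ j, q j = x + PiLp.single 2 j (p j - x j) := by
      intro j
      ext l
      rw [hq]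
      by_cases hl : l = j
      · subst hl
        simp
      · simp [hl]
    have hbound : ∀ j, f (q j) ≤ f x + ⟪f' x j, p j - x j⟫ + L / 2 * ‖p j - x j‖ ^ 2 := by
      intro j
      have h := quadratic_upper_bound hf hL x (PiLp.single 2 j (p j - x j))
      rw [← hstep, PiLp.norm_single] at h
      have hin : ⟪f' x, PiLp.single 2 j (p j - x j)⟫ = ⟪f' x j, p j - x j⟫ := by
        rw [PiLp.inner_apply, Finset.sum_eq_single j]
        · simp
        · intro l _ hl
          simp [hl]
        · simp
      rwa [hin] at h
    have hsum := Finset.sum_le_sum fun j (_ : j ∈ Finset.univ) => hbound j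
    have hinner : ∑ j, ⟪f' x j, p j - x j⟫ = ⟪f' x, p - x⟫ := by
      simp [PiLp.inner_apply]
    have hnorm : ∑ j, ‖p j - x j‖ ^ 2 = ‖p - x‖ ^ 2 := by
      simp [PiLp.norm_sq_eq_of_L2]
    rw [Finset.sum_add_distrib, Finset.sum_add_distrib, ← Finset.mul_sum, hinner, hnorm,
      Finset.sum_const, Finset.card_univ, ← hm, nsmul_eq_mul] at hsum
    have hgrad := gradient_inequality hc hf x p
    have hm2 : (2 : ℝ) ≤ m := by exact_mod_cast hge
    have hhalf : (1 / 2 : ℝ) ≤ (m - 1) / m := by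
      rw [div_le_div_iff₀ two_pos (by linarith)]
      linarith
    have hnn : 0 ≤ L * ‖p - x‖ ^ 2 := by positivity
    have := mul_le_mul_of_nonneg_right hhalf hnn
    linarith

lemma sum_separable_update {J : Type*} [Fintype J] [DecidableEq J]
    {F : J → Type*} [∀ j, NormedAddCommGroup (F j)] (g : ∀ j, F j → ℝ) (x p : PiLp 2 F)
    (q : J → PiLp 2 F) (hq : ∀ j, (q j).ofLp = Function.update x.ofLp j (p j)) :
    ∑ j, ∑ l, g l (q j l) = ((Fintype.card J : ℝ) - 1) * ∑ l, g l (x l) + ∑ l, g l (p l) := by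
  have hrow : ∀ j, ∑ l, g l (q j l) = ∑ l, g l (x l) + (g j (p j) - g j (x j)) := by
    intro j
    rw [← sub_eq_iff_eq_add', ← Finset.sum_sub_distrib, Finset.sum_eq_single j]
    · simp [hq]
    · intro l _ hl
      simp [hq, hl]
    · simp
  simp only [hrow, Finset.sum_add_distrib, Finset.sum_sub_distrib, Finset.sum_const,
    Finset.card_univ, nsmul_eq_mul]
  ring

lemma convexOn_separable {J : Type*} [Fintype J]
    {F : J → Type*} [∀ j, NormedAddCommGroup (F j)] [∀ j, InnerProductSpace ℝ (F j)]
    (g : ∀ j, F j → ℝ) (hg : ∀ j, ConvexOn ℝ Set.univ (g j)) :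
    ConvexOn ℝ Set.univ (fun u : PiLp 2 F => ∑ j, g j (u j)) := by
  refine ⟨convex_univ, fun u _ w _ a b ha hb hab => ?_⟩
  simp only [smul_eq_mul, Finset.mul_sum, ← Finset.sum_add_distrib]
  exact Finset.sum_le_sum fun j _ =>
    (hg j).2 (Set.mem_univ (u j)) (Set.mem_univ (w j)) ha hb hab

open scoped RealInnerProductSpace in
/-- Lemma 4.2 (descent-type lemma) in averaged form for the RDCIAG method: with
`D(u) = ∑_i h_i(u) + ∑_j g_j(u_j)`, `η₁ = (m-1)(∑_i ℓ_i)/m`, `η₂ = ℓ_max |I| (τ+1)/2`, and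
`yt` the proximal update using the delayed aggregated gradient `v = ∑_i ∇h_i(y(k - d_i))`,
for every `z`:
`(1/m) ∑_j D(update_j(y k, yt)) ≤ ((m-1)/m) D(y k) + (1/m) D(z)
  + ((η₁+η₂)/m - 1/(2αm))‖yt - y k‖² + (1/(2αm))‖z - y k‖² - (1/(2αm))‖z - yt‖²
  + (η₂/m) ∑_{s=k-τ}^{k-1} ‖y(s+1) - y(s)‖²`. -/
theorem rdciag_descent_lemma
    {J : Type*} [Fintype J] [Nonempty J] [DecidableEq J]
    {F : J → Type*} [∀ j, NormedAddCommGroup (F j)] [∀ j, InnerProductSpace ℝ (F j)]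
    {I : Type*} [Fintype I] [Nonempty I]
    (h : I → PiLp 2 F → ℝ) (hconv : ∀ i, ConvexOn ℝ Set.univ (h i))
    (h' : I → PiLp 2 F → PiLp 2 F)
    (hdiff : ∀ i, ∀ u : PiLp 2 F, HasFDerivAt (h i) ((innerSL ℝ) (h' i u)) u)
    (ℓ : I → ℝ) (hℓ : ∀ i, 0 ≤ ℓ i)
    (hLip : ∀ i, ∀ u w : PiLp 2 F, ‖h' i u - h' i w‖ ≤ ℓ i * ‖u - w‖)
    (ℓmax : ℝ) (hℓmax : ℓmax = Finset.univ.sup' Finset.univ_nonempty ℓ)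
    (g : ∀ j, F j → ℝ) (hg : ∀ j, ConvexOn ℝ Set.univ (g j))
    (D : PiLp 2 F → ℝ) (hD : ∀ u : PiLp 2 F, D u = ∑ i : I, h i u + ∑ j : J, g j (u j))
    (m : ℕ) (hm : m = Fintype.card J)
    (η₁ : ℝ) (hη₁ : η₁ = (m - 1) * (∑ i : I, ℓ i) / m)
    (τ k : ℕ) (hτk : τ ≤ k) (y : ℕ → PiLp 2 F)
    (d : I → ℕ) (hd : ∀ i, d i ≤ τ)
    (α : ℝ) (hα : 0 < α)
    (η₂ : ℝ) (hη₂ : η₂ = ℓmax * (Fintype.card I) * (τ + 1) / 2)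
    (v : PiLp 2 F) (hv : v = ∑ i : I, h' i (y (k - d i)))
    (yt : PiLp 2 F)
    (hmin : ∀ u : PiLp 2 F,
      ⟪v, yt - y k⟫ + 1 / (2 * α) * ‖yt - y k‖ ^ 2 + ∑ j : J, g j (yt j) ≤
      ⟪v, u - y k⟫ + 1 / (2 * α) * ‖u - y k‖ ^ 2 + ∑ j : J, g j (u j))
    (upd : PiLp 2 F → PiLp 2 F → J → PiLp 2 F)
    (hupd : ∀ u ut : PiLp 2 F, ∀ j : J, upd u ut j = Function.update u j (ut j)) :
    ∀ z : PiLp 2 F,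
      (1 / m) * ∑ j : J, D (upd (y k) yt j) ≤
        ((m - 1) / m) * D (y k) + (1 / m) * D z
        + ((η₁ + η₂) / m - 1 / (2 * α * m)) * ‖yt - y k‖ ^ 2
        + 1 / (2 * α * m) * ‖z - y k‖ ^ 2 - 1 / (2 * α * m) * ‖z - yt‖ ^ 2
        + (η₂ / m) * ∑ s ∈ Finset.Ico (k - τ) k, ‖y (s + 1) - y s‖ ^ 2 := by
  intro z
  have hmpos : (0 : ℝ) < m := by
    have : 0 < m := hm ▸ Fintype.card_pos
    exact_mod_cast this
  set x := y k with hx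
  set S := ∑ s ∈ Finset.Ico (k - τ) k, ‖y (s + 1) - y s‖ ^ 2 with hS
  have hS0 : 0 ≤ S := Finset.sum_nonneg fun _ _ => by positivity
  have hcoord : ∀ i, ∑ j, h i (upd x yt j) ≤ (m - 1) * h i x + (h i z
      + ⟪h' i (y (k - d i)), yt - z⟫ + ℓmax * ((τ + 1) / 2 * (‖yt - x‖ ^ 2 + S)))
      + (m - 1) / m * ℓ i * ‖yt - x‖ ^ 2 := by
    intro i
    have h1 := sum_update_le (hconv i) (hdiff i) (hℓ i) (hLip i) x yt (upd x yt) (hupd x yt) m hm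
    have h2 := quadratic_upper_bound (hdiff i) (hLip i) (y (k - d i)) (yt - y (k - d i))
    have h3 := gradient_inequality (hconv i) (hdiff i) (y (k - d i)) z
    have h4 := norm_sq_delay_le y yt hτk (hd i)
    have h5 : ℓ i ≤ ℓmax := hℓmax ▸ Finset.le_sup' ℓ (Finset.mem_univ i)
    rw [add_sub_cancel] at h2
    have h6 : ⟪h' i (y (k - d i)), yt - z⟫ = ⟪h' i (y (k - d i)), yt - y (k - d i)⟫
        - ⟪h' i (y (k - d i)), z - y (k - d i)⟫ := by
      rw [← inner_sub_right, sub_sub_sub_cancel_right]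
    have h7 := mul_le_mul_of_nonneg_left h4 (hℓ i)
    have h8 : ℓ i * ((τ + 1) / 2 * (‖yt - x‖ ^ 2 + S)) ≤
        ℓmax * ((τ + 1) / 2 * (‖yt - x‖ ^ 2 + S)) :=
      mul_le_mul_of_nonneg_right h5 (by positivity)
    linarith
  have hsmooth := Finset.sum_le_sum fun i (_ : i ∈ Finset.univ) => hcoord i
  simp only [Finset.sum_add_distrib, ← Finset.mul_sum, ← Finset.sum_mul, Finset.sum_const,
    Finset.card_univ, nsmul_eq_mul, ← sum_inner, ← hv] at hsmooth
  have hthree := three_point (convexOn_separable g hg) hmin z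
  have hsep := sum_separable_update g x yt (upd x yt) (hupd x yt)
  rw [← hm] at hsep
  have hLHS : ∑ j, D (upd x yt j) =
      ∑ i, ∑ j, h i (upd x yt j) + ((m - 1) * ∑ j, g j (x j) + ∑ j, g j (yt j)) := by
    simp only [hD, Finset.sum_add_distrib, hsep]
    rw [Finset.sum_comm]
  have hη₁' : (m - 1) / m * (∑ i, ℓ i) = η₁ := by
    rw [hη₁]
    ring
  have hη₂' : ℓmax * ((τ + 1) / 2 * (Fintype.card I * ‖yt - x‖ ^ 2 + Fintype.card I * S)) =
      η₂ * (‖yt - x‖ ^ 2 + S) := by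
    rw [hη₂]
    ring
  rw [hη₁'] at hsmooth
  have hmain : ∑ j, D (upd x yt j) ≤ (m - 1) * D x + D z
      + (η₁ + η₂ - 1 / (2 * α)) * ‖yt - x‖ ^ 2
      + 1 / (2 * α) * ‖z - x‖ ^ 2 - 1 / (2 * α) * ‖z - yt‖ ^ 2 + η₂ * S := by
    rw [hLHS, hD x, hD z]
    linarith
  have hdiv := mul_le_mul_of_nonneg_left hmain (one_div_nonneg.2 hmpos.le)
  refine hdiv.trans_eq ?_
  field_simp
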